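/- arXiv:1806.10976 — 2 statements merged into one kernel-verified Lean document; each statement's English description precedes it below -/
import Mathlib

section
/- Let A ∈ ℂ^{N×K} and B ∈ ℂ^{M×K} be matrices such that neither A nor B has an all-zero column. Then the rank of their Khatri-Rao product satisfies rank(A ⊙ B) ≥ max{rank(A), rank(B)}. -/
open Matrix
open scoped BigOperators

theorem khatriRao_aux {N M K P : Type} [Fintype N] [Fintype M] [Fintype K] [Fintype P]
    (A : Matrix N K ℂ) (B : Matrix M K ℂ) (C : Matrix P K ℂ)
    (hC : ∀ i j, ∃ p, ∀ k, C p k = A i k * B j k)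
    (hB : ∀ k, ∃ j, B j k ≠ 0) : A.rank ≤ C.rank := by
  rw [Matrix.rank_eq_finrank_span_cols, Matrix.rank_eq_finrank_span_cols]
  obtain ⟨κ, a, ha, hs, hli⟩ := exists_linearIndependent' ℂ A.col
  haveI : Finite κ := Finite.of_injective a ha
  haveI := Fintype.ofFinite κ
  have hli2 : LinearIndependent ℂ (C.col ∘ a) := by
    rw [Fintype.linearIndependent_iff] at hli ⊢
    intro g hg l
    obtain ⟨j, hj⟩ := hB (a l)
    have h := hli (fun t => g t * B j (a t)) (by
      funext i
      obtain ⟨p, hp⟩ := hC i j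
      have h2 := congrFun hg p
      simp only [Finset.sum_apply, Pi.smul_apply, Function.comp_apply, Matrix.col_apply,
        smul_eq_mul, Pi.zero_apply, hp] at h2 ⊢
      rw [← h2]
      exact Finset.sum_congr rfl fun t _ => by ring) l
    exact (mul_eq_zero.mp h).resolve_right hj
  rw [← hs, finrank_span_eq_card hli, ← finrank_span_eq_card hli2]
  exact Submodule.finrank_mono (Submodule.span_mono (Set.range_comp_subset_range a C.col))

/-- Rank of a Khatri-Rao product: if neither `A` nor `B` has an all-zero
column, then `rank(A ⊙ B) ≥ max{rank A, rank B}`. -/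
theorem rank_khatriRao_ge_max (N M K : ℕ)
    (A : Matrix (Fin N) (Fin K) ℂ) (B : Matrix (Fin M) (Fin K) ℂ)
    (hA : ∀ k : Fin K, ∃ i : Fin N, A i k ≠ 0)
    (hB : ∀ k : Fin K, ∃ j : Fin M, B j k ≠ 0) :
    max A.rank B.rank ≤
      (Matrix.of fun (p : Fin N × Fin M) (k : Fin K) => A p.1 k * B p.2 k).rank := by
  exact max_le (khatriRao_aux A B _ (fun i j => ⟨(i, j), fun k => rfl⟩) hB)
    (khatriRao_aux B A _ (fun j i => ⟨(i, j), fun k => mul_comm _ _⟩) hA)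
end

section
/- Let R ≥ 1 and for each i = 1,…,R let Ψ_i be a complex L_i × K matrix with no all-zero column. If there exists an index j ∈ {1,…,R} such that rank(Ψ_j) = K, then the R-fold Khatri-Rao product Ψ_1 ⊙ ⋯ ⊙ Ψ_R has full column rank K. -/
open Matrix
open scoped BigOperators

lemma rank_eq_iff_linInd {m : Type*} [Fintype m] {K : ℕ} (A : Matrix m (Fin K) ℂ) :
    A.rank = K ↔ LinearIndependent ℂ A.col := by
  rw [linearIndependent_iff_card_eq_finrank_span, Matrix.rank_eq_finrank_span_cols,
    Fintype.card_fin, Set.finrank]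
  exact eq_comm

/-- If each factor of an `R`-fold Khatri-Rao product has no all-zero column and
at least one factor has full column rank `K`, then the Khatri-Rao product has
full column rank `K`. -/
theorem khatriRao_full_column_rank (R : ℕ) (hR : 1 ≤ R) (L : Fin R → ℕ) (K : ℕ)
    (Ψ : ∀ i : Fin R, Matrix (Fin (L i)) (Fin K) ℂ)
    (hz : ∀ (i : Fin R) (k : Fin K), ∃ j : Fin (L i), Ψ i j k ≠ 0)
    (hrank : ∃ j : Fin R, (Ψ j).rank = K) :
    (Matrix.of fun (j : ∀ i, Fin (L i)) (k : Fin K) => ∏ i, Ψ i (j i) k).rank = K := by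
  obtain ⟨p, hp⟩ := hrank
  rw [rank_eq_iff_linInd] at hp ⊢
  rw [Fintype.linearIndependent_iff] at hp ⊢
  intro c hc k
  choose J hJ using fun i => hz i k
  have h := hp (fun k' => c k' * ∏ i ∈ Finset.univ.erase p, Ψ i (J i) k') (by
    funext x
    have h1 := congrFun hc (Function.update J p x)
    simp only [Finset.sum_apply, Pi.smul_apply, smul_eq_mul, Matrix.col_apply, Matrix.of_apply,
      Pi.zero_apply] at h1 ⊢
    rw [← h1]
    refine Finset.sum_congr rfl fun k' _ => ?_
    rw [← Finset.mul_prod_erase Finset.univ _ (Finset.mem_univ p), Function.update_self]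
    have : ∏ i ∈ Finset.univ.erase p, Ψ i (Function.update J p x i) k'
        = ∏ i ∈ Finset.univ.erase p, Ψ i (J i) k' := by
      refine Finset.prod_congr rfl fun i hi => ?_
      rw [Function.update_of_ne (Finset.ne_of_mem_erase hi)]
    rw [this]
    ring) k
  exact (mul_eq_zero.mp h).resolve_right (Finset.prod_ne_zero_iff.mpr fun i _ => hJ i)
end
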